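/- For every integer Δ ≥ 3, let G be the double star on n = 2Δ vertices consisting of two adjacent vertices u and w, with u additionally adjacent to Δ−1 leaves and w additionally adjacent to Δ−1 other leaves. Then γ^ID(G) = 2Δ − 2 = ((Δ−1)/Δ)·n. -/

import Mathlib

open SimpleGraph

/-- The closed neighborhood `N[v]` of a vertex `v` in `G`. -/
def closedNbhd {V : Type*} (G : SimpleGraph V) (v : V) : Set V :=
  insert v (G.neighborSet v)

/-- `C` is an identifying code of `G`: it dominates every vertex and the
closed neighborhoods of distinct vertices intersect `C` differently. -/
def IsIDCode {V : Type*} (G : SimpleGraph V) (C : Set V) : Prop :=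
  (∀ v, (closedNbhd G v ∩ C).Nonempty) ∧
  ∀ u w : V, u ≠ w → closedNbhd G u ∩ C ≠ closedNbhd G w ∩ C

/-- The identification number `γ^ID(G)`: the minimum size of an identifying code. -/
noncomputable def idNum {V : Type*} [Fintype V] (G : SimpleGraph V) : ℕ :=
  sInf {k | ∃ C : Set V, C.ncard = k ∧ IsIDCode G C}

/-- `G` is identifiable (closed-twin-free). -/
def Identifiable {V : Type*} (G : SimpleGraph V) : Prop :=
  ∀ u w : V, u ≠ w → closedNbhd G u ≠ closedNbhd G w

/-- The maximum degree of a finite graph `G`. -/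
noncomputable def maxDeg {V : Type*} [Fintype V] (G : SimpleGraph V) : ℕ :=
  Finset.univ.sup fun v => (G.neighborSet v).ncard

/-- `S` is a dominating set of `G`. -/
def IsDomSet {V : Type*} (G : SimpleGraph V) (S : Set V) : Prop :=
  ∀ v, (closedNbhd G v ∩ S).Nonempty

/-- The domination number `γ(G)`. -/
noncomputable def domNum {V : Type*} [Fintype V] (G : SimpleGraph V) : ℕ :=
  sInf {k | ∃ S : Set V, S.ncard = k ∧ IsDomSet G S}

/-- The star `K_{1,k}`: vertex `0` is adjacent to each of the `k` other vertices. -/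
def starGraph (k : ℕ) : SimpleGraph (Fin (k + 1)) :=
  SimpleGraph.fromRel fun a _ => a = 0

/-- The graph obtained from `G'` by appending a star with `k` extra leaves onto the
vertex `v`: we add a new universal vertex `u = Sum.inr none` adjacent to `v`,
and `k` new leaves `Sum.inr (some i)` adjacent to `u` (so the star has `k + 1`
leaves in total, one of which is identified with `v`, i.e. a `(k+1)`-star is
appended by one of its leaves onto `v`). -/
def appendStar {V : Type*} (G' : SimpleGraph V) (v : V) (k : ℕ) :
    SimpleGraph (V ⊕ Option (Fin k)) :=
  SimpleGraph.fromRel fun a b =>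
    (∃ x y, a = Sum.inl x ∧ b = Sum.inl y ∧ G'.Adj x y) ∨
    (a = Sum.inl v ∧ b = Sum.inr none) ∨
    (∃ i, a = Sum.inr none ∧ b = Sum.inr (some i))

/-- The double star on `2Δ` vertices: the two centers are `(false, 0)` and `(true, 0)`,
which are adjacent, and each center `(c, 0)` is adjacent to the `Δ − 1` leaves
`(c, i)` with `i ≠ 0`. -/
def doubleStar (Δ : ℕ) : SimpleGraph (Bool × Fin Δ) :=
  SimpleGraph.fromRel fun a b =>
    (a.2.val = 0 ∧ b.2.val = 0) ∨ (a.2.val = 0 ∧ a.1 = b.1)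

/-! A leaf missed by an identifying code is dominated only by its neighbour, which therefore lies in
the code; that neighbour is not itself a leaf, since adjacent leaves are closed twins, and it is not
shared by two missed leaves, since nothing would separate them. So trading each missed leaf for its
neighbour injects the leaves into the code, and no identifying code is smaller than the set of
leaves `L`. If `L` is independent and every other vertex has two leaf neighbours, then `L` is itself
an identifying code: a leaf `v` has `N[v] ∩ L = {v}`, and for any other vertex `v` the set
`N[v] ∩ L` has at least two elements, each of which has `v` as its only neighbour. -/

section Leaves

variable {V : Type*} {G : SimpleGraph V} {C : Set V} {u v w : V}

/-- The leaves of `G`, i.e. the vertices of degree one, expressed through the neighbor set so that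
no finiteness is required. -/
def leaves (G : SimpleGraph V) : Set V :=
  {v | ∃ w, G.neighborSet v = {w}}

theorem mem_closedNbhd : w ∈ closedNbhd G v ↔ w = v ∨ G.Adj v w :=
  Iff.rfl

theorem neighborSet_eq_singleton_of_mem_leaves (hv : v ∈ leaves G) (hvw : G.Adj v w) :
    G.neighborSet v = {w} := by
  obtain ⟨x, hx⟩ := hv
  have hwx : w = x := hx.subset hvw
  rw [hx, hwx]

theorem notMem_leaves_of_nontrivial_neighborSet (hv : (G.neighborSet v).Nontrivial) :
    v ∉ leaves G :=
  fun ⟨_, hw⟩ => Set.not_nontrivial_singleton (hw ▸ hv)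

theorem Identifiable.isIndepSet_leaves (hG : Identifiable G) : G.IsIndepSet (leaves G) := by
  intro v hv w hw hne hvw
  refine hG v w hne ?_
  rw [closedNbhd, closedNbhd, neighborSet_eq_singleton_of_mem_leaves hv hvw,
    neighborSet_eq_singleton_of_mem_leaves hw hvw.symm, Set.pair_comm]

namespace IsIDCode

theorem identifiable (hC : IsIDCode G C) : Identifiable G :=
  fun u v hne h => hC.2 u v hne (by rw [h])

theorem eq_of_neighborSet_eq (hC : IsIDCode G C) (hu : u ∉ C) (hv : v ∉ C)
    (h : G.neighborSet u = G.neighborSet v) : u = v := by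
  by_contra hne
  refine hC.2 u v hne ?_
  rw [closedNbhd, closedNbhd, Set.insert_inter_of_notMem hu, Set.insert_inter_of_notMem hv, h]

theorem mem_of_neighborSet_eq_singleton (hC : IsIDCode G C) (hv : v ∉ C)
    (h : G.neighborSet v = {w}) : w ∈ C := by
  have hdom := hC.1 v
  rwa [closedNbhd, Set.insert_inter_of_notMem hv, h, Set.singleton_inter_nonempty] at hdom

theorem encard_leaves_sdiff_le (hC : IsIDCode G C) :
    (leaves G \ C).encard ≤ (C \ leaves G).encard := by
  have hleaf : ∀ v ∈ leaves G, ∃ w, G.neighborSet v = {w} := fun _ hv => hv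
  choose! support hsupport using hleaf
  refine Set.encard_le_encard_of_injOn (f := support) ?_ ?_
  · rintro v ⟨hv, hvC⟩
    have hadj : G.Adj v (support v) := (hsupport v hv).superset rfl
    exact ⟨hC.mem_of_neighborSet_eq_singleton hvC (hsupport v hv), fun hw =>
      hC.identifiable.isIndepSet_leaves hv hw hadj.ne hadj⟩
  · rintro u ⟨hu, huC⟩ v ⟨hv, hvC⟩ huv
    refine hC.eq_of_neighborSet_eq huC hvC ?_
    rw [hsupport u hu, hsupport v hv, huv]

theorem encard_leaves_le (hC : IsIDCode G C) : (leaves G).encard ≤ C.encard :=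
  calc (leaves G).encard = (leaves G \ C).encard + (leaves G ∩ C).encard :=
        (Set.encard_sdiff_add_encard_inter _ _).symm
    _ ≤ (C \ leaves G).encard + (C ∩ leaves G).encard := by
        rw [Set.inter_comm]
        exact add_le_add_left hC.encard_leaves_sdiff_le _
    _ = C.encard := Set.encard_sdiff_add_encard_inter _ _

end IsIDCode

theorem closedNbhd_inter_eq_singleton_of_isIndepSet {S : Set V} (hS : G.IsIndepSet S) (hv : v ∈ S) :
    closedNbhd G v ∩ S = {v} := by
  ext w
  simp only [Set.mem_inter_iff, mem_closedNbhd, Set.mem_singleton_iff]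
  constructor
  · rintro ⟨rfl | hvw, hw⟩
    · rfl
    · exact (hS hv hw hvw.ne hvw).elim
  · rintro rfl
    exact ⟨Or.inl rfl, hv⟩

theorem isIDCode_leaves (hind : G.IsIndepSet (leaves G))
    (htwo : ∀ v ∉ leaves G, (G.neighborSet v ∩ leaves G).Nontrivial) :
    IsIDCode G (leaves G) := by
  have htrace_leaf {v} (hv : v ∈ leaves G) :=
    closedNbhd_inter_eq_singleton_of_isIndepSet hind hv
  have htrace {v} (hv : v ∉ leaves G) :
      closedNbhd G v ∩ leaves G = G.neighborSet v ∩ leaves G :=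
    Set.insert_inter_of_notMem hv
  refine ⟨fun v => ?_, fun u v hne heq => hne ?_⟩
  · by_cases hv : v ∈ leaves G
    · exact htrace_leaf hv ▸ Set.singleton_nonempty v
    · exact htrace hv ▸ (htwo v hv).nonempty
  · by_cases hu : u ∈ leaves G <;> by_cases hv : v ∈ leaves G
    · rwa [htrace_leaf hu, htrace_leaf hv, Set.singleton_eq_singleton_iff] at heq
    · rw [htrace_leaf hu, htrace hv] at heq
      exact (Set.not_nontrivial_singleton (heq ▸ htwo v hv)).elim
    · rw [htrace hu, htrace_leaf hv] at heq
      exact (Set.not_nontrivial_singleton (heq ▸ htwo u hu)).elim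
    · rw [htrace hu, htrace hv] at heq
      obtain ⟨x, hux, hx⟩ := (htwo u hu).nonempty
      have hvx : G.Adj v x := (heq.subset ⟨hux, hx⟩).1
      exact (neighborSet_eq_singleton_of_mem_leaves hx hvx.symm).subset hux.symm

theorem idNum_eq_ncard_leaves [Fintype V] (hind : G.IsIndepSet (leaves G))
    (htwo : ∀ v ∉ leaves G, (G.neighborSet v ∩ leaves G).Nontrivial) :
    idNum G = (leaves G).ncard := by
  refine IsLeast.csInf_eq ⟨⟨leaves G, rfl, isIDCode_leaves hind htwo⟩, ?_⟩
  rintro _ ⟨C, rfl, hC⟩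
  exact ENat.toNat_le_toNat hC.encard_leaves_le C.toFinite.encard_lt_top.ne

end Leaves

section DoubleStar

variable {n : ℕ} [NeZero n]

theorem neighborSet_doubleStar_of_ne_zero (c : Bool) {i : Fin n} (hi : i ≠ 0) :
    (doubleStar n).neighborSet (c, i) = {(c, 0)} := by
  ext ⟨d, j⟩
  simp only [doubleStar, mem_neighborSet, fromRel_adj, Set.mem_singleton_iff, Prod.mk.injEq,
    Fin.val_eq_zero_iff, ne_eq]
  grind

theorem mk_mem_leaves_doubleStar (c : Bool) {i : Fin n} (hi : i ≠ 0) :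
    (c, i) ∈ leaves (doubleStar n) :=
  ⟨(c, 0), neighborSet_doubleStar_of_ne_zero c hi⟩

theorem nontrivial_neighborSet_inter_leaves_doubleStar (hn : 3 ≤ n) (c : Bool) :
    ((doubleStar n).neighborSet (c, 0) ∩ leaves (doubleStar n)).Nontrivial := by
  have hindices : ({0}ᶜ : Set (Fin n)).Nontrivial := by
    rw [← Set.one_lt_ncard_iff_nontrivial, Set.ncard_compl, Set.ncard_singleton, Nat.card_fin]
    omega
  refine (hindices.image (Prod.mk_right_injective c)).mono ?_
  rintro _ ⟨i, hi, rfl⟩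
  have hadj : (doubleStar n).Adj (c, i) (c, 0) :=
    (neighborSet_doubleStar_of_ne_zero c hi).superset rfl
  exact ⟨hadj.symm, mk_mem_leaves_doubleStar c hi⟩

theorem mk_mem_leaves_doubleStar_iff (hn : 3 ≤ n) {c : Bool} {i : Fin n} :
    (c, i) ∈ leaves (doubleStar n) ↔ i ≠ 0 := by
  refine ⟨?_, mk_mem_leaves_doubleStar c⟩
  rintro hleaf rfl
  exact notMem_leaves_of_nontrivial_neighborSet
    ((nontrivial_neighborSet_inter_leaves_doubleStar hn c).mono Set.inter_subset_left) hleaf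

theorem isIndepSet_leaves_doubleStar (hn : 3 ≤ n) :
    (doubleStar n).IsIndepSet (leaves (doubleStar n)) := by
  rintro ⟨c, i⟩ hi ⟨d, j⟩ hj - hadj
  rw [mk_mem_leaves_doubleStar_iff hn] at hi hj
  have hcenter : (d, j) = (c, 0) := (neighborSet_doubleStar_of_ne_zero c hi).subset hadj
  exact hj (congrArg Prod.snd hcenter)

theorem ncard_leaves_doubleStar (hn : 3 ≤ n) : (leaves (doubleStar n)).ncard = 2 * n - 2 := by
  have hleaves : leaves (doubleStar n) = Set.univ ×ˢ {0}ᶜ := by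
    ext ⟨c, i⟩
    simp [mk_mem_leaves_doubleStar_iff hn]
  rw [hleaves, Set.ncard_prod, Set.ncard_compl]
  simp [Nat.mul_sub]

theorem idNum_doubleStar (hn : 3 ≤ n) : idNum (doubleStar n) = 2 * n - 2 := by
  rw [← ncard_leaves_doubleStar hn]
  refine idNum_eq_ncard_leaves (isIndepSet_leaves_doubleStar hn) ?_
  rintro ⟨c, i⟩ hi
  obtain rfl : i = 0 := not_not.mp (mt (mk_mem_leaves_doubleStar c) hi)
  exact nontrivial_neighborSet_inter_leaves_doubleStar hn c

end DoubleStar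

/-- for `Δ ≥ 3`, the double star `G` on `n = 2Δ` vertices satisfies
`γ^ID(G) = 2Δ − 2 = ((Δ−1)/Δ)·n`. -/
theorem stmt_17 (Δ : ℕ) (hΔ : 3 ≤ Δ) :
    idNum (doubleStar Δ) = 2 * Δ - 2 ∧
    (idNum (doubleStar Δ) : ℝ) = ((Δ : ℝ) - 1) / Δ * (2 * (Δ : ℝ)) := by
  have : NeZero Δ := ⟨by omega⟩
  refine ⟨idNum_doubleStar hΔ, ?_⟩
  rw [idNum_doubleStar hΔ, Nat.cast_sub (by omega)]
  push_cast
  field_simp
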